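/- Let H be a hierarchical clustering method satisfying the Axiom of Value (A1) and the Axiom of Transformation (A2). Then for every network (X, A_X), writing u_X = H(X, A_X), for all pairs of nodes x, x' ∈ X it holds that u^NR_X(x,x') ≤ u_X(x,x') ≤ u^R_X(x,x'), where u^NR_X and u^R_X denote the nonreciprocal and reciprocal ultrametrics. -/

import Mathlib

noncomputable section

/-- A dissimilarity function on a node set: nonnegative and zero exactly on the diagonal.
It need not be symmetric nor satisfy the triangle inequality. -/
def IsDissim {X : Type} (A : X → X → ℝ) : Prop :=
  (∀ x x', 0 ≤ A x x') ∧ (∀ x x', A x x' = 0 ↔ x = x')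

/-- A symmetric dissimilarity. -/
def IsSym {X : Type} (A : X → X → ℝ) : Prop := ∀ x x', A x x' = A x' x

/-- An ultrametric: nonnegative, zero exactly on the diagonal, symmetric, and
satisfying the strong triangle inequality. -/
def IsUltrametric {X : Type} (u : X → X → ℝ) : Prop :=
  (∀ x x', 0 ≤ u x x') ∧ (∀ x x', u x x' = 0 ↔ x = x') ∧
    (∀ x x', u x x' = u x' x) ∧
    (∀ x x' x'', u x x'' ≤ max (u x x') (u x' x''))

/-- The cost of the chain `x :: l`: the maximum dissimilarity over consecutive links. -/
def chainCost {X : Type} (A : X → X → ℝ) : X → List X → ℝ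
  | _, [] => 0
  | x, y :: l => max (A x y) (chainCost A y l)

/-- The set of costs of chains from `x` to `x'`. -/
def chainCosts {X : Type} (A : X → X → ℝ) (x x' : X) : Set ℝ :=
  {c | ∃ l : List X, (x :: l).getLast (List.cons_ne_nil x l) = x' ∧ chainCost A x l = c}

/-- The directed minimum chain cost `ũ*_X(x,x')`: minimum cost over all chains from `x` to `x'`. -/
def minChainCost {X : Type} (A : X → X → ℝ) (x x' : X) : ℝ :=
  sInf (chainCosts A x x')

/-- The nonreciprocal ultrametric `u^NR`. -/
def nonrecipUltra {X : Type} (A : X → X → ℝ) (x x' : X) : ℝ :=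
  max (minChainCost A x x') (minChainCost A x' x)

/-- The reciprocal ultrametric `u^R`. -/
def recipUltra {X : Type} (A : X → X → ℝ) (x x' : X) : ℝ :=
  minChainCost (fun a b => max (A a b) (A b a)) x x'

/-- The unilateral ultrametric `u^U`. -/
def uniUltra {X : Type} (A : X → X → ℝ) (x x' : X) : ℝ :=
  minChainCost (fun a b => min (A a b) (A b a)) x x'

/-- The minimum loop cost `mlc(X, A_X)`: minimum cost over loops, i.e. chains from some
node `x` back to itself containing at least one node different from `x`. -/
def mlc {X : Type} (A : X → X → ℝ) : ℝ :=
  sInf {c | ∃ (x : X) (l : List X),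
    (x :: l).getLast (List.cons_ne_nil x l) = x ∧ (∃ y ∈ l, y ≠ x) ∧ chainCost A x l = c}

/-- The separation `sep(X, A_X)`: minimum dissimilarity over pairs of distinct nodes. -/
def sep {X : Type} (A : X → X → ℝ) : ℝ :=
  sInf {c | ∃ x x' : X, x ≠ x' ∧ A x x' = c}

/-- A hierarchical clustering method: assigns to every (finite) network an output
two-variable function on the same node set. -/
abbrev HCMethod := ∀ (X : Type) [Fintype X], (X → X → ℝ) → X → X → ℝ

/-- A hierarchical clustering method outputs an ultrametric on every network. -/
def IsHCMethod (H : HCMethod) : Prop :=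
  ∀ (X : Type) [Fintype X] (A : X → X → ℝ), IsDissim A → IsUltrametric (H X A)

/-- `p, q` are the two (distinct) nodes of a two-node set. -/
def TwoNode {X : Type} (p q : X) : Prop := p ≠ q ∧ ∀ x : X, x = p ∨ x = q

/-- Axiom of Value (A1): on every two-node network the output clusters the two nodes at
the maximum of the two dissimilarities. -/
def AxiomValue (H : HCMethod) : Prop :=
  ∀ (X : Type) [Fintype X] (p q : X), TwoNode p q →
    ∀ A : X → X → ℝ, IsDissim A → H X A p q = max (A p q) (A q p)

/-- Axiom of Transformation (A2): dissimilarity-reducing maps do not increase output values. -/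
def AxiomTransform (H : HCMethod) : Prop :=
  ∀ (X Y : Type) [Fintype X] [Fintype Y] (AX : X → X → ℝ) (AY : Y → Y → ℝ),
    IsDissim AX → IsDissim AY →
    ∀ φ : X → Y, (∀ x x', AY (φ x) (φ x') ≤ AX x x') →
    ∀ x x' : X, H Y AY (φ x) (φ x') ≤ H X AX x x'

/-- The canonical dissimilarity `A_{n,α,β}` on `Fin n`: `α` for `i > j`, `β` for `i < j`,
`0` on the diagonal. -/
def canonDissim (n : ℕ) (α β : ℝ) : Fin n → Fin n → ℝ :=
  fun i j => if i = j then 0 else if j < i then α else β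

/-- Extended Axiom of Value (A1'): on every permuted canonical network `Δ_n(α,β,Π)` the
output ultrametric equals `max(α,β)` off the diagonal. -/
def ExtAxiomValue (H : HCMethod) : Prop :=
  ∀ (n : ℕ) (α β : ℝ), 0 < α → 0 < β → ∀ π : Equiv.Perm (Fin n),
    ∀ i j : Fin n, i ≠ j →
      H (Fin n) (fun i j => canonDissim n α β (π i) (π j)) i j = max α β

/-- Alternative Axiom of Value (A1''): on every two-node network the output clusters the
two nodes at the minimum of the two dissimilarities. -/
def AltAxiomValue (H : HCMethod) : Prop :=
  ∀ (X : Type) [Fintype X] (p q : X), TwoNode p q →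
    ∀ A : X → X → ℝ, IsDissim A → H X A p q = min (A p q) (A q p)

/-- Agnostic Axiom of Value (A1'''): on every two-node network the output value lies
between the minimum and maximum of the two dissimilarities. -/
def AgnAxiomValue (H : HCMethod) : Prop :=
  ∀ (X : Type) [Fintype X] (p q : X), TwoNode p q →
    ∀ A : X → X → ℝ, IsDissim A →
      min (A p q) (A q p) ≤ H X A p q ∧ H X A p q ≤ max (A p q) (A q p)

/-!
For the upper bound, mapping the two-node network with dissimilarities `A x y` and `A y x` onto
`{x, y} ⊆ X` gives `u x y ≤ max (A x y) (A y x)`, and the strong triangle inequality propagates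
this along chains.

For the lower bound, let `d` be the directed minimum chain cost from `x` to `x'`, and let `S` be
the set of nodes that `x` reaches at a cost below `d`. Every link leaving `S` costs at least `d`,
so collapsing `S` and its complement maps `X` onto a two-node network whose output value is at
least `d`.
-/

section Chains

variable {X : Type} (A : X → X → ℝ)

theorem chainCost_nonneg (x : X) (l : List X) : 0 ≤ chainCost A x l := by
  induction l generalizing x with
  | nil => exact le_rfl
  | cons y l ih => exact le_max_of_le_right (ih y)

theorem chainCost_append_singleton (x : X) (l : List X) (w : X) :
    chainCost A x (l ++ [w]) =
      max (chainCost A x l) (A ((x :: l).getLast (List.cons_ne_nil x l)) w) := by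
  induction l generalizing x with
  | nil => exact max_comm _ _
  | cons y l ih =>
    rw [List.cons_append, chainCost, chainCost, ih y, max_assoc,
      List.getLast_cons (List.cons_ne_nil y l)]

theorem bddBelow_chainCosts (x x' : X) : BddBelow (chainCosts A x x') :=
  ⟨0, by rintro _ ⟨l, -, rfl⟩; exact chainCost_nonneg A x l⟩

theorem chainCosts_nonempty (x x' : X) : (chainCosts A x x').Nonempty :=
  ⟨_, [x'], rfl, rfl⟩

variable {A}

theorem le_minChainCost_iff {c : ℝ} {x x' : X} :
    c ≤ minChainCost A x x' ↔
      ∀ l : List X, (x :: l).getLast (List.cons_ne_nil x l) = x' → c ≤ chainCost A x l := by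
  rw [minChainCost, le_csInf_iff (bddBelow_chainCosts A x x') (chainCosts_nonempty A x x')]
  exact ⟨fun h l hl => h _ ⟨l, hl, rfl⟩, by rintro h _ ⟨l, hl, rfl⟩; exact h l hl⟩

theorem minChainCost_lt_iff {c : ℝ} {x x' : X} :
    minChainCost A x x' < c ↔
      ∃ l : List X, (x :: l).getLast (List.cons_ne_nil x l) = x' ∧ chainCost A x l < c := by
  simpa only [not_le, not_forall, exists_prop] using not_congr (le_minChainCost_iff (A := A))

theorem minChainCost_self_le (x : X) : minChainCost A x x ≤ 0 :=
  le_minChainCost_iff.1 le_rfl [] rfl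

theorem minChainCost_le_max (x z w : X) :
    minChainCost A x w ≤ max (minChainCost A x z) (A z w) := by
  by_contra! h
  obtain ⟨hxz, hzw⟩ := max_lt_iff.1 h
  obtain ⟨l, rfl, hl⟩ := minChainCost_lt_iff.1 hxz
  refine (max_lt hl hzw).not_ge ?_
  rw [← chainCost_append_singleton]
  exact le_minChainCost_iff.1 le_rfl (l ++ [w]) (by simp)

end Chains

namespace IsUltrametric

variable {X : Type} {u A : X → X → ℝ}

theorem le_chainCost (hu : IsUltrametric u) (huA : ∀ x y, u x y ≤ A x y) (x : X) (l : List X) :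
    u x ((x :: l).getLast (List.cons_ne_nil x l)) ≤ chainCost A x l := by
  obtain ⟨-, eq_zero_iff, -, le_max⟩ := hu
  induction l generalizing x with
  | nil => exact ((eq_zero_iff x x).2 rfl).le
  | cons y l ih =>
    rw [List.getLast_cons (List.cons_ne_nil y l)]
    exact (le_max x y _).trans (max_le_max (huA x y) (ih y))

theorem le_minChainCost (hu : IsUltrametric u) (huA : ∀ x y, u x y ≤ A x y) (x x' : X) :
    u x x' ≤ minChainCost A x x' :=
  le_minChainCost_iff.2 fun l hl => hl ▸ hu.le_chainCost huA x l

end IsUltrametric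

namespace IsDissim

variable {X : Type} {A : X → X → ℝ}

theorem pos (hA : IsDissim A) {x y : X} (hxy : x ≠ y) : 0 < A x y :=
  (hA.1 x y).lt_of_ne' (mt (hA.2 x y).1 hxy)

theorem exists_pos_le [Finite X] (hA : IsDissim A) :
    ∃ ε : ℝ, 0 < ε ∧ ∀ x y, x ≠ y → ε ≤ A x y := by
  obtain ⟨ε, hε, hlt⟩ := Pi.exists_forall_pos_add_lt
    (x := fun _ : {p : X × X // p.1 ≠ p.2} => (0 : ℝ)) fun p => hA.pos p.2
  exact ⟨ε, hε, fun x y hxy => (zero_add ε ▸ hlt ⟨(x, y), hxy⟩).le⟩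

end IsDissim

theorem isDissim_canonDissim (n : ℕ) {α β : ℝ} (hα : 0 < α) (hβ : 0 < β) :
    IsDissim (canonDissim n α β) := by
  refine ⟨fun i j => ?_, fun i j => ?_⟩ <;> unfold canonDissim <;> split_ifs <;>
    simp [hα.le, hβ.le, hα.ne', hβ.ne', *]

section Methods

variable {H : HCMethod} {X : Type} [Fintype X] {A : X → X → ℝ}

theorem AxiomValue.canonDissim_two (hA1 : AxiomValue H) {α β : ℝ} (hα : 0 < α) (hβ : 0 < β) :
    H (Fin 2) (canonDissim 2 α β) 0 1 = max α β := by
  rw [hA1 (Fin 2) 0 1 ⟨by decide, by decide⟩ _ (isDissim_canonDissim 2 hα hβ), max_comm]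
  simp [canonDissim]

theorem IsHCMethod.le_max_dissim (hH : IsHCMethod H) (hA1 : AxiomValue H) (hA2 : AxiomTransform H)
    (hA : IsDissim A) (x y : X) : H X A x y ≤ max (A x y) (A y x) := by
  rcases eq_or_ne x y with rfl | hxy
  · rw [((hH X A hA).2.1 x x).2 rfl]
    exact le_max_of_le_left (hA.1 x x)
  have hyx_pos : 0 < A y x := hA.pos hxy.symm
  have hxy_pos : 0 < A x y := hA.pos hxy
  have hφ : ∀ i j, A (![x, y] i) (![x, y] j) ≤ canonDissim 2 (A y x) (A x y) i j := by
    simp [Fin.forall_fin_two, canonDissim, (hA.2 _ _).2]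
  calc H X A x y
    _ ≤ H (Fin 2) (canonDissim 2 (A y x) (A x y)) 0 1 :=
        hA2 (Fin 2) X _ A (isDissim_canonDissim 2 hyx_pos hxy_pos) hA ![x, y] hφ 0 1
    _ = max (A x y) (A y x) := by rw [hA1.canonDissim_two hyx_pos hxy_pos, max_comm]

theorem AxiomTransform.le_of_cut (hA2 : AxiomTransform H) (hA1 : AxiomValue H)
    (hA : IsDissim A) {S : Set X} {d : ℝ} (hd : 0 < d) (hS : ∀ z ∈ S, ∀ w ∉ S, d ≤ A z w)
    {x x' : X} (hx : x ∈ S) (hx' : x' ∉ S) : d ≤ H X A x x' := by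
  classical
  obtain ⟨ε, hε, hεA⟩ := hA.exists_pos_le
  let φ : X → Fin 2 := fun z => if z ∈ S then 0 else 1
  have hφ : ∀ z w, canonDissim 2 ε d (φ z) (φ w) ≤ A z w := by
    intro z w
    by_cases hz : z ∈ S <;> by_cases hw : w ∈ S
    · simpa [φ, hz, hw, canonDissim] using hA.1 z w
    · simpa [φ, hz, hw, canonDissim] using hS z hz w hw
    · simpa [φ, hz, hw, canonDissim] using hεA z w (ne_of_mem_of_not_mem hw hz).symm
    · simpa [φ, hz, hw, canonDissim] using hA.1 z w
  calc d
    _ ≤ max ε d := le_max_right ε d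
    _ = H (Fin 2) (canonDissim 2 ε d) (φ x) (φ x') := by
        simp only [φ, hx, hx', if_true, if_false, hA1.canonDissim_two hε hd]
    _ ≤ H X A x x' := hA2 X (Fin 2) A _ hA (isDissim_canonDissim 2 hε hd) φ hφ x x'

theorem IsHCMethod.minChainCost_le (hH : IsHCMethod H) (hA1 : AxiomValue H)
    (hA2 : AxiomTransform H) (hA : IsDissim A) (x x' : X) :
    minChainCost A x x' ≤ H X A x x' := by
  rcases le_or_gt (minChainCost A x x') 0 with hd | hd
  · exact hd.trans ((hH X A hA).1 x x')
  let S : Set X := {z | minChainCost A x z < minChainCost A x x'}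
  have hS : ∀ z ∈ S, ∀ w ∉ S, minChainCost A x x' ≤ A z w := fun z hz w hw =>
    (le_max_iff.1 ((not_lt.1 hw).trans (minChainCost_le_max x z w))).resolve_left (not_le.2 hz)
  have hx : x ∈ S := (minChainCost_self_le x).trans_lt hd
  have hx' : x' ∉ S := lt_irrefl (minChainCost A x x')
  exact hA2.le_of_cut hA1 hA hd hS hx hx'

end Methods

/-- Any admissible method lies between nonreciprocal and reciprocal clustering. -/
theorem extremal_ultrametrics
    (H : HCMethod) (hH : IsHCMethod H) (hA1 : AxiomValue H) (hA2 : AxiomTransform H)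
    (X : Type) [Fintype X] (A : X → X → ℝ) (hA : IsDissim A) (x x' : X) :
    nonrecipUltra A x x' ≤ H X A x x' ∧ H X A x x' ≤ recipUltra A x x' := by
  have hu : IsUltrametric (H X A) := hH X A hA
  have hsymm : H X A x' x = H X A x x' := hu.2.2.1 x' x
  have lower : ∀ y z, minChainCost A y z ≤ H X A y z := hH.minChainCost_le hA1 hA2 hA
  have edge : ∀ y z, H X A y z ≤ max (A y z) (A z y) := hH.le_max_dissim hA1 hA2 hA
  exact ⟨max_le (lower x x') (hsymm ▸ lower x' x), hu.le_minChainCost edge x x'⟩
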